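/- Finite-n upper bound in the proof of Corollary 2: let Λ be a quantum channel on d×d complex matrices, h a positive semidefinite Hermitian d×d matrix, and 𝔢 ∈ [0, λ_max(h)]. Suppose that for every e ∈ [0, λ_max(h)] and every n ≥ 1 there exists a d×d density matrix σ with re Tr[σ h] ≤ e such that for all unit vectors ψ_1, …, ψ_n ∈ ℂ^d with Σ_i ⟨ψ_i, h ψ_i⟩ ≤ n e one has ℰ(Λ^{⊗n}(|ψ_1⟩⟨ψ_1| ⊗ ⋯ ⊗ |ψ_n⟩⟨ψ_n|); h^{(n)}) ≤ ℰ((Λ(σ))^{⊗n}; h^{(n)}). Then for every n ≥ 1 and every separable n-site density matrix ρ with re Tr[ρ h^{(n)}] ≤ n𝔢, one has (1/n) ℰ(Λ^{⊗n}(ρ); h^{(n)}) ≤ χ_tot(Λ;𝔢). -/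

import Mathlib

/-!
Diagonalizing every factor writes a separable state as a mixture, with weights `w j`, of pure
product states of energy per site `e j ∈ [0, λ_max(h)]`. The energy is linear in the state, so
`∑ j, w j * e j ≤ 𝔢`, and the pair `(w, e)` is admissible in the definition of `χ_tot(Λ; 𝔢)`. The
ergotropy is a supremum of linear functionals of the state, hence convex, so it remains to bound the
output of each pure product state: by optimality it is at most the ergotropy of `(Λ σ)^{⊗n}` for a
state `σ` of energy at most `e j`, hence at most `n * ℰ_tot^{(1)}(Λ; e j)`.

A real supremum of an unbounded set is `0`, so each step upwards in the hierarchy `ℰ_tot`,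
`ℰ_tot^{(1)}`, `χ_tot` needs an upper bound. As `h` is positive semidefinite, the ergotropy is at
most the energy, and all three quantities are at most `λ_max(h)`.
-/

open Matrix Filter Topology
open scoped ComplexOrder Kronecker

noncomputable section

/-- A density matrix: positive semidefinite with unit trace. -/
def IsDensity {n : Type*} [Fintype n] [DecidableEq n] (ρ : Matrix n n ℂ) : Prop :=
  ρ.PosSemidef ∧ ρ.trace = 1

/-- The ergotropy `ℰ(ρ;H) = ⨆_{U ∈ U(d)} (re Tr[ρH] − re Tr[U ρ U† H])`. -/
def ergo {n : Type*} [Fintype n] [DecidableEq n] (ρ H : Matrix n n ℂ) : ℝ :=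
  ⨆ U : Matrix.unitaryGroup n ℂ,
    ((ρ * H).trace.re -
      ((U : Matrix n n ℂ) * ρ * star (U : Matrix n n ℂ) * H).trace.re)

/-- `N`-fold tensor power of a `d × d` matrix:
`ρ^{⊗N} f g = ∏_{i<N} ρ (f i) (g i)`. -/
def tpow {d : ℕ} (ρ : Matrix (Fin d) (Fin d) ℂ) (N : ℕ) :
    Matrix (Fin N → Fin d) (Fin N → Fin d) ℂ :=
  Matrix.of fun f g => ∏ i, ρ (f i) (g i)

/-- Tensor product `ρ₁ ⊗ ⋯ ⊗ ρₙ` of `n` single-site matrices. -/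
def prodMat {d n : ℕ} (ρs : Fin n → Matrix (Fin d) (Fin d) ℂ) :
    Matrix (Fin n → Fin d) (Fin n → Fin d) ℂ :=
  Matrix.of fun f g => ∏ i, ρs i (f i) (g i)

/-- Noninteracting `N`-site Hamiltonian:
`h^{(N)} f g = Σ_{i<N} h (f i) (g i) · ∏_{j≠i} (if f j = g j then 1 else 0)`. -/
def hSum {d : ℕ} (h : Matrix (Fin d) (Fin d) ℂ) (N : ℕ) :
    Matrix (Fin N → Fin d) (Fin N → Fin d) ℂ :=
  Matrix.of fun f g =>
    ∑ i, h (f i) (g i) * ∏ j ∈ Finset.univ.erase i, (if f j = g j then (1:ℂ) else 0)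

/-- The ampliation `Λ ⊗ id_k` of a linear map on `d × d` matrices. -/
def Ampliation {d : ℕ} (Λ : Matrix (Fin d) (Fin d) ℂ →ₗ[ℂ] Matrix (Fin d) (Fin d) ℂ)
    (k : ℕ) (M : Matrix (Fin d × Fin k) (Fin d × Fin k) ℂ) :
    Matrix (Fin d × Fin k) (Fin d × Fin k) ℂ :=
  Matrix.of fun p q => Λ (Matrix.of fun i' j' => M (i', p.2) (j', q.2)) p.1 q.1

/-- A quantum channel: a ℂ-linear, trace-preserving, completely positive map. -/
def IsChannel {d : ℕ} (Λ : Matrix (Fin d) (Fin d) ℂ →ₗ[ℂ] Matrix (Fin d) (Fin d) ℂ) : Prop :=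
  (∀ M, (Λ M).trace = M.trace) ∧
  ∀ k : ℕ, ∀ M : Matrix (Fin d × Fin k) (Fin d × Fin k) ℂ,
    M.PosSemidef → (Ampliation Λ k M).PosSemidef

/-- Local ergotropy of an `n`-site state: the supremum is restricted to
product unitaries `U₁ ⊗ ⋯ ⊗ Uₙ`. -/
def locErgo {d n : ℕ} (σ H : Matrix (Fin n → Fin d) (Fin n → Fin d) ℂ) : ℝ :=
  ⨆ U : Fin n → Matrix.unitaryGroup (Fin d) ℂ,
    ((σ * H).trace.re -
      ((prodMat fun i => (U i : Matrix (Fin d) (Fin d) ℂ)) * σ *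
        star (prodMat fun i => (U i : Matrix (Fin d) (Fin d) ℂ)) * H).trace.re)

/-- Von Neumann entropy `S(σ) = Σ_i −λ_i log λ_i` of a Hermitian matrix. -/
def vnEntropy {n : Type*} [Fintype n] [DecidableEq n]
    {σ : Matrix n n ℂ} (hσ : σ.IsHermitian) : ℝ :=
  ∑ i, Real.negMulLog (hσ.eigenvalues i)

/-- `i`-th single-site reduced density matrix of an `n`-site state. -/
def red {d n : ℕ} (ρ : Matrix (Fin n → Fin d) (Fin n → Fin d) ℂ) (i : Fin n) :
    Matrix (Fin d) (Fin d) ℂ :=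
  Matrix.of fun a b =>
    ∑ f ∈ Finset.univ.filter (fun f : Fin n → Fin d => f i = a), ρ f (Function.update f i b)

/-- Separability: `ρ` is a convex combination of product density matrices. -/
def SepState {d n : ℕ} (ρ : Matrix (Fin n → Fin d) (Fin n → Fin d) ℂ) : Prop :=
  ∃ (m : ℕ) (p : Fin m → ℝ) (σs : Fin m → Fin n → Matrix (Fin d) (Fin d) ℂ),
    (∀ k, 0 ≤ p k) ∧ (∑ k, p k = 1) ∧ (∀ k i, IsDensity (σs k i)) ∧
    ρ = ∑ k, (p k : ℂ) • prodMat (σs k)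

/-- Total ergotropy `ℰ_tot(σ;h) = ⨆_{N≥1} ℰ(σ^{⊗N}; h^{(N)})/N`. -/
def Etot {d : ℕ} (σ h : Matrix (Fin d) (Fin d) ℂ) : ℝ :=
  ⨆ N : ℕ+, ergo (tpow σ (N:ℕ)) (hSum h (N:ℕ)) / (N:ℕ)

/-- Largest eigenvalue of a Hermitian matrix. -/
def lamMax {d : ℕ} {h : Matrix (Fin d) (Fin d) ℂ} (hh : h.IsHermitian) : ℝ :=
  ⨆ i, hh.eigenvalues i

/-- Single-shot energy-constrained maximal output ergotropy `ℰ^{(1)}(Λ;e)`. -/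
def E1 {d : ℕ} (Λ : Matrix (Fin d) (Fin d) ℂ →ₗ[ℂ] Matrix (Fin d) (Fin d) ℂ)
    (h : Matrix (Fin d) (Fin d) ℂ) (e : ℝ) : ℝ :=
  sSup {x | ∃ ρ : Matrix (Fin d) (Fin d) ℂ,
    IsDensity ρ ∧ (ρ * h).trace.re ≤ e ∧ x = ergo (Λ ρ) h}

/-- Single-shot energy-constrained maximal output total ergotropy `ℰ_tot^{(1)}(Λ;e)`. -/
def E1tot {d : ℕ} (Λ : Matrix (Fin d) (Fin d) ℂ →ₗ[ℂ] Matrix (Fin d) (Fin d) ℂ)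
    (h : Matrix (Fin d) (Fin d) ℂ) (e : ℝ) : ℝ :=
  sSup {x | ∃ ρ : Matrix (Fin d) (Fin d) ℂ,
    IsDensity ρ ∧ (ρ * h).trace.re ≤ e ∧ x = Etot (Λ ρ) h}

/-- `χ(Λ;e)`: supremum of `Σ_j p_j ℰ^{(1)}(Λ;e_j)` over finite probability vectors
`(p_j)` and energies `e_j ∈ [0, lmax]` with `Σ_j p_j e_j ≤ e`. -/
def chi {d : ℕ} (Λ : Matrix (Fin d) (Fin d) ℂ →ₗ[ℂ] Matrix (Fin d) (Fin d) ℂ)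
    (h : Matrix (Fin d) (Fin d) ℂ) (lmax e : ℝ) : ℝ :=
  sSup {x | ∃ (m : ℕ) (p ev : Fin m → ℝ),
    (∀ j, 0 ≤ p j) ∧ (∑ j, p j = 1) ∧ (∀ j, ev j ∈ Set.Icc (0:ℝ) lmax) ∧
    (∑ j, p j * ev j ≤ e) ∧ x = ∑ j, p j * E1 Λ h (ev j)}

/-- `χ_tot(Λ;e)`: as `χ` but with the total ergotropy. -/
def chiTot {d : ℕ} (Λ : Matrix (Fin d) (Fin d) ℂ →ₗ[ℂ] Matrix (Fin d) (Fin d) ℂ)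
    (h : Matrix (Fin d) (Fin d) ℂ) (lmax e : ℝ) : ℝ :=
  sSup {x | ∃ (m : ℕ) (p ev : Fin m → ℝ),
    (∀ j, 0 ≤ p j) ∧ (∑ j, p j = 1) ∧ (∀ j, ev j ∈ Set.Icc (0:ℝ) lmax) ∧
    (∑ j, p j * ev j ≤ e) ∧ x = ∑ j, p j * E1tot Λ h (ev j)}

/-- `ℰ_loc^{(n)}(Λ;E)`. -/
def ElocN {d : ℕ}
    (Λfam : ∀ n : ℕ, Matrix (Fin n → Fin d) (Fin n → Fin d) ℂ →ₗ[ℂ]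
      Matrix (Fin n → Fin d) (Fin n → Fin d) ℂ)
    (h : Matrix (Fin d) (Fin d) ℂ) (n : ℕ) (E : ℝ) : ℝ :=
  sSup {x | ∃ ρ : Matrix (Fin n → Fin d) (Fin n → Fin d) ℂ,
    IsDensity ρ ∧ (ρ * hSum h n).trace.re ≤ E ∧ x = locErgo (Λfam n ρ) (hSum h n)}

/-- `ℰ_{loc,sep}^{(n)}(Λ;E)`. -/
def ElocSepN {d : ℕ}
    (Λfam : ∀ n : ℕ, Matrix (Fin n → Fin d) (Fin n → Fin d) ℂ →ₗ[ℂ]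
      Matrix (Fin n → Fin d) (Fin n → Fin d) ℂ)
    (h : Matrix (Fin d) (Fin d) ℂ) (n : ℕ) (E : ℝ) : ℝ :=
  sSup {x | ∃ ρ : Matrix (Fin n → Fin d) (Fin n → Fin d) ℂ,
    IsDensity ρ ∧ SepState ρ ∧ (ρ * hSum h n).trace.re ≤ E ∧
    x = locErgo (Λfam n ρ) (hSum h n)}

/-- `ℰ_sep^{(n)}(Λ;E)`. -/
def EsepN {d : ℕ}
    (Λfam : ∀ n : ℕ, Matrix (Fin n → Fin d) (Fin n → Fin d) ℂ →ₗ[ℂ]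
      Matrix (Fin n → Fin d) (Fin n → Fin d) ℂ)
    (h : Matrix (Fin d) (Fin d) ℂ) (n : ℕ) (E : ℝ) : ℝ :=
  sSup {x | ∃ ρ : Matrix (Fin n → Fin d) (Fin n → Fin d) ℂ,
    IsDensity ρ ∧ SepState ρ ∧ (ρ * hSum h n).trace.re ≤ E ∧
    x = ergo (Λfam n ρ) (hSum h n)}

/-! ### Energy -/

section Energy

variable {m : Type*} [Fintype m]

/-- The mean energy `re Tr[ρ H]` of the state `ρ` with respect to the Hamiltonian `H`, as a
real-bilinear map `energy H ρ`; real scalars are what convex combinations of states need. -/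
def energy : Matrix m m ℂ →ₗ[ℝ] Matrix m m ℂ →ₗ[ℝ] ℝ :=
  LinearMap.mk₂ ℝ (fun H ρ => (ρ * H).trace.re)
    (fun _ _ _ => by rw [Matrix.mul_add, trace_add, Complex.add_re])
    (fun _ _ _ => by rw [Matrix.mul_smul, trace_smul, Complex.smul_re])
    (fun _ _ _ => by rw [Matrix.add_mul, trace_add, Complex.add_re])
    (fun _ _ _ => by rw [Matrix.smul_mul, trace_smul, Complex.smul_re])

theorem energy_apply (H ρ : Matrix m m ℂ) : energy H ρ = (ρ * H).trace.re :=
  rfl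

theorem energy_vecMulVec_star (H : Matrix m m ℂ) (ψ : m → ℂ) :
    energy H (vecMulVec ψ (star ψ)) = (star ψ ⬝ᵥ H *ᵥ ψ).re := by
  rw [energy_apply, vecMulVec_mul, trace_vecMulVec, dotProduct_comm, dotProduct_mulVec]

theorem isHermitian_eq_sum_eigenvalues_smul_vecMulVec [DecidableEq m] {𝕜 : Type*} [RCLike 𝕜]
    {A : Matrix m m 𝕜} (hA : A.IsHermitian) :
    A = ∑ a, hA.eigenvalues a •
      vecMulVec ⇑(hA.eigenvectorBasis a) (star ⇑(hA.eigenvectorBasis a)) := by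
  ext i j
  conv_lhs => rw [hA.spectral_theorem, Unitary.conjStarAlgAut_apply, mul_apply]
  rw [Matrix.sum_apply]
  refine Finset.sum_congr rfl fun a _ => ?_
  rw [mul_diagonal, Matrix.smul_apply, vecMulVec_apply, RCLike.real_smul_eq_coe_mul,
    Function.comp_apply, mul_right_comm, mul_comm]
  rfl

theorem energy_nonneg {H ρ : Matrix m m ℂ} (hH : H.PosSemidef) (hρ : ρ.PosSemidef) :
    0 ≤ energy H ρ := by
  classical
  rw [isHermitian_eq_sum_eigenvalues_smul_vecMulVec hρ.isHermitian, map_sum]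
  refine Finset.sum_nonneg fun a _ => ?_
  rw [map_smul, energy_vecMulVec_star]
  exact smul_nonneg (hρ.eigenvalues_nonneg a) (hH.re_dotProduct_nonneg _)

variable [DecidableEq m]

open scoped MatrixOrder in
theorem posSemidef_algebraMap_sub_of_eigenvalues_le {𝕜 : Type*} [RCLike 𝕜] {H : Matrix m m 𝕜}
    (hH : H.IsHermitian) {c : ℝ} (hc : ∀ i, hH.eigenvalues i ≤ c) :
    (algebraMap ℝ (Matrix m m 𝕜) c - H).PosSemidef := by
  refine le_iff.mp (le_algebraMap_of_spectrum_le ?_ hH)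
  rwa [hH.spectrum_real_eq_range_eigenvalues, Set.forall_mem_range]

namespace IsDensity

theorem energy_algebraMap {ρ : Matrix m m ℂ} (hρ : IsDensity ρ) (c : ℝ) :
    energy (algebraMap ℝ (Matrix m m ℂ) c) ρ = c := by
  rw [Algebra.algebraMap_eq_smul_one, map_smul, LinearMap.smul_apply, energy_apply, mul_one, hρ.2,
    Complex.one_re, smul_eq_mul, mul_one]

theorem energy_le_of_eigenvalues_le {H ρ : Matrix m m ℂ} (hρ : IsDensity ρ) (hH : H.IsHermitian)
    {c : ℝ} (hc : ∀ i, hH.eigenvalues i ≤ c) : energy H ρ ≤ c := by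
  have hgap : 0 ≤ energy (algebraMap ℝ (Matrix m m ℂ) c - H) ρ :=
    energy_nonneg (posSemidef_algebraMap_sub_of_eigenvalues_le hH hc) hρ.1
  rwa [map_sub, LinearMap.sub_apply, hρ.energy_algebraMap, sub_nonneg] at hgap

theorem sum_eigenvalues {ρ : Matrix m m ℂ} (hρ : IsDensity ρ) :
    ∑ a, hρ.1.isHermitian.eigenvalues a = 1 := by
  have htrace : ((∑ a, hρ.1.isHermitian.eigenvalues a : ℝ) : ℂ) = 1 := by
    rw [Complex.ofReal_sum]
    exact hρ.1.isHermitian.trace_eq_sum_eigenvalues.symm.trans hρ.2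
  exact_mod_cast htrace

end IsDensity

theorem isDensity_vecMulVec_star {ψ : m → ℂ} (hψ : star ψ ⬝ᵥ ψ = 1) :
    IsDensity (vecMulVec ψ (star ψ)) :=
  ⟨posSemidef_vecMulVec_self_star ψ, by rw [trace_vecMulVec, dotProduct_comm, hψ]⟩

theorem lamMax_nonneg {d : ℕ} {h : Matrix (Fin d) (Fin d) ℂ} (hps : h.PosSemidef) :
    0 ≤ lamMax hps.isHermitian :=
  Real.iSup_nonneg hps.eigenvalues_nonneg

theorem IsDensity.energy_le_lamMax {d : ℕ} {h σ : Matrix (Fin d) (Fin d) ℂ} (hσ : IsDensity σ)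
    (hh : h.IsHermitian) : energy h σ ≤ lamMax hh :=
  hσ.energy_le_of_eigenvalues_le hh fun i => le_ciSup (Set.finite_range _).bddAbove i

end Energy

/-! ### Tensor products -/

section TensorProduct

variable {d n : ℕ}

theorem prodMat_mul (A B : Fin n → Matrix (Fin d) (Fin d) ℂ) :
    prodMat A * prodMat B = prodMat fun i => A i * B i := by
  ext f g
  simp only [prodMat, mul_apply, of_apply, ← Finset.prod_mul_distrib, Fintype.prod_sum]

theorem conjTranspose_prodMat (A : Fin n → Matrix (Fin d) (Fin d) ℂ) :
    (prodMat A)ᴴ = prodMat fun i => (A i)ᴴ := by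
  ext f g
  simp only [prodMat, conjTranspose_apply, of_apply, star_prod]

theorem trace_prodMat (A : Fin n → Matrix (Fin d) (Fin d) ℂ) :
    (prodMat A).trace = ∏ i, (A i).trace := by
  simp only [prodMat, trace, diag_apply, of_apply, Fintype.prod_sum]

theorem prodMat_sum {κ : Type*} [Fintype κ] (A : Fin n → κ → Matrix (Fin d) (Fin d) ℂ) :
    prodMat (fun i => ∑ a, A i a) = ∑ s : Fin n → κ, prodMat fun i => A i (s i) := by
  classical
  ext f g
  simp only [prodMat, of_apply, Matrix.sum_apply, Fintype.prod_sum]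

theorem prodMat_smul {R : Type*} [CommSemiring R] [Algebra R ℂ] (c : Fin n → R)
    (A : Fin n → Matrix (Fin d) (Fin d) ℂ) :
    prodMat (fun i => c i • A i) = (∏ i, c i) • prodMat A := by
  ext f g
  simp only [prodMat, of_apply, Matrix.smul_apply, Finset.prod_smul]

open scoped MatrixOrder Matrix.Norms.L2Operator in
theorem posSemidef_prodMat {A : Fin n → Matrix (Fin d) (Fin d) ℂ} (hA : ∀ i, (A i).PosSemidef) :
    (prodMat A).PosSemidef := by
  choose B hB using fun i => CStarAlgebra.nonneg_iff_eq_star_mul_self.mp (hA i).nonneg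
  obtain rfl : A = fun i => (B i)ᴴ * B i := funext hB
  rw [← prodMat_mul, ← conjTranspose_prodMat]
  exact posSemidef_conjTranspose_mul_self _

theorem hSum_eq_sum_prodMat (h : Matrix (Fin d) (Fin d) ℂ) (n : ℕ) :
    hSum h n = ∑ i : Fin n, prodMat (Function.update 1 i h) := by
  ext f g
  simp only [hSum, prodMat, of_apply, Matrix.sum_apply]
  refine Finset.sum_congr rfl fun i _ => ?_
  rw [← Finset.mul_prod_erase _ _ (Finset.mem_univ i), Function.update_self]
  congr 1
  refine Finset.prod_congr rfl fun j hj => ?_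
  rw [Function.update_of_ne (Finset.ne_of_mem_erase hj), Pi.one_apply, one_apply]

theorem posSemidef_hSum {h : Matrix (Fin d) (Fin d) ℂ} (hps : h.PosSemidef) (n : ℕ) :
    (hSum h n).PosSemidef := by
  rw [hSum_eq_sum_prodMat]
  refine posSemidef_sum _ fun i _ => posSemidef_prodMat ?_
  rw [Function.forall_update_iff (p := fun _ => PosSemidef)]
  exact ⟨hps, fun _ _ => PosSemidef.one⟩

theorem energy_prodMat_update_one {A : Fin n → Matrix (Fin d) (Fin d) ℂ}
    (hA : ∀ i, (A i).trace = 1) (i : Fin n) (h : Matrix (Fin d) (Fin d) ℂ) :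
    energy (prodMat (Function.update 1 i h)) (prodMat A) = energy h (A i) := by
  rw [energy_apply, energy_apply, prodMat_mul, trace_prodMat, Finset.prod_eq_single i _ (by simp),
    Function.update_self]
  intro j _ hj
  rw [Function.update_of_ne hj, Pi.one_apply, mul_one, hA]

theorem energy_hSum_prodMat {A : Fin n → Matrix (Fin d) (Fin d) ℂ} (hA : ∀ i, (A i).trace = 1)
    (h : Matrix (Fin d) (Fin d) ℂ) :
    energy (hSum h n) (prodMat A) = ∑ i, energy h (A i) := by
  simp only [hSum_eq_sum_prodMat, map_sum, LinearMap.sum_apply, energy_prodMat_update_one hA]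

theorem energy_hSum_prodMat_div_mem_Icc {A : Fin n → Matrix (Fin d) (Fin d) ℂ}
    (hA : ∀ i, IsDensity (A i)) {h : Matrix (Fin d) (Fin d) ℂ} (hps : h.PosSemidef) :
    energy (hSum h n) (prodMat A) / n ∈ Set.Icc 0 (lamMax hps.isHermitian) := by
  rw [energy_hSum_prodMat fun i => (hA i).2]
  refine ⟨div_nonneg (Finset.sum_nonneg fun i _ => energy_nonneg hps (hA i).1) n.cast_nonneg,
    div_le_of_le_mul₀ n.cast_nonneg (lamMax_nonneg hps) ?_⟩
  calc ∑ i, energy h (A i)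
      ≤ ∑ _i : Fin n, lamMax hps.isHermitian :=
        Finset.sum_le_sum fun i _ => (hA i).energy_le_lamMax hps.isHermitian
    _ = lamMax hps.isHermitian * n := by simp [mul_comm]

end TensorProduct

/-! ### Pure product states -/

section PureProduct

variable {d n : ℕ}

/-- The pure product state `|ψ₁⟩⟨ψ₁| ⊗ ⋯ ⊗ |ψₙ⟩⟨ψₙ|`; the vectors are not assumed normalized. -/
def pureProduct (ψ : Fin n → Fin d → ℂ) : Matrix (Fin n → Fin d) (Fin n → Fin d) ℂ :=
  prodMat fun i => vecMulVec (ψ i) (star (ψ i))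

theorem energy_hSum_pureProduct {ψ : Fin n → Fin d → ℂ} (hψ : ∀ i, star (ψ i) ⬝ᵥ ψ i = 1)
    (h : Matrix (Fin d) (Fin d) ℂ) :
    energy (hSum h n) (pureProduct ψ) = ∑ i, (star (ψ i) ⬝ᵥ h *ᵥ ψ i).re := by
  rw [pureProduct, energy_hSum_prodMat fun i => (isDensity_vecMulVec_star (hψ i)).2]
  simp only [energy_vecMulVec_star]

theorem IsDensity.exists_eq_sum_smul_vecMulVec {m : Type*} [Fintype m] [DecidableEq m]
    {σ : Matrix m m ℂ} (hσ : IsDensity σ) :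
    ∃ (l : m → ℝ) (v : m → m → ℂ), (∀ a, 0 ≤ l a) ∧ ∑ a, l a = 1 ∧
      (∀ a, star (v a) ⬝ᵥ v a = 1) ∧ σ = ∑ a, l a • vecMulVec (v a) (star (v a)) := by
  refine ⟨_, _, hσ.1.eigenvalues_nonneg, hσ.sum_eigenvalues, fun a => ?_,
    isHermitian_eq_sum_eigenvalues_smul_vecMulVec hσ.1.isHermitian⟩
  rw [dotProduct_comm, ← EuclideanSpace.inner_eq_star_dotProduct]
  simp

theorem exists_prodMat_eq_sum_smul_pureProduct {σ : Fin n → Matrix (Fin d) (Fin d) ℂ}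
    (hσ : ∀ i, IsDensity (σ i)) :
    ∃ (w : (Fin n → Fin d) → ℝ) (ψ : (Fin n → Fin d) → Fin n → Fin d → ℂ),
      (∀ s, 0 ≤ w s) ∧ ∑ s, w s = 1 ∧ (∀ s i, star (ψ s i) ⬝ᵥ ψ s i = 1) ∧
      prodMat σ = ∑ s, w s • pureProduct (ψ s) := by
  choose l v hl hl_sum hv hσ_eq using fun i => (hσ i).exists_eq_sum_smul_vecMulVec
  refine ⟨fun s => ∏ i, l i (s i), fun s i => v i (s i),
    fun s => Finset.prod_nonneg fun i _ => hl i (s i), ?_, fun s i => hv i (s i), ?_⟩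
  · simp only [← Fintype.prod_sum, hl_sum, Finset.prod_const_one]
  · rw [funext hσ_eq, prodMat_sum]
    exact Finset.sum_congr rfl fun s _ => prodMat_smul _ _

theorem SepState.exists_eq_sum_smul_pureProduct
    {ρ : Matrix (Fin n → Fin d) (Fin n → Fin d) ℂ} (hρ : SepState ρ) :
    ∃ (J : Type) (_ : Fintype J) (w : J → ℝ) (ψ : J → Fin n → Fin d → ℂ),
      (∀ j, 0 ≤ w j) ∧ ∑ j, w j = 1 ∧ (∀ j i, star (ψ j i) ⬝ᵥ ψ j i = 1) ∧
      ρ = ∑ j, w j • pureProduct (ψ j) := by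
  obtain ⟨m, p, σ, hp, hp_sum, hσ, rfl⟩ := hρ
  choose w ψ hw hw_sum hψ hσ_eq using fun k => exists_prodMat_eq_sum_smul_pureProduct (hσ k)
  refine ⟨Fin m × (Fin n → Fin d), inferInstance, fun j => p j.1 * w j.1 j.2,
    fun j => ψ j.1 j.2, fun j => mul_nonneg (hp _) (hw _ _), ?_, fun j => hψ j.1 j.2, ?_⟩
  · simp only [Fintype.sum_prod_type, ← Finset.mul_sum, hw_sum, mul_one, hp_sum]
  · simp only [Fintype.sum_prod_type, hσ_eq, Complex.coe_smul, Finset.smul_sum, smul_smul]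

end PureProduct

/-! ### Ergotropy -/

section Ergotropy

variable {m : Type*} [Fintype m] [DecidableEq m]

/-- The work `re Tr[ρ H] − re Tr[U ρ U† H]` extracted by the unitary `U` from the state `ρ`, as a
real-linear functional of `ρ`. -/
def extractedWork (H : Matrix m m ℂ) (U : unitaryGroup m ℂ) : Matrix m m ℂ →ₗ[ℝ] ℝ :=
  energy H - energy H ∘ₗ LinearMap.mulLeftRight ℝ ((U : Matrix m m ℂ), star (U : Matrix m m ℂ))

theorem isCompact_unitaryGroup {𝕜 : Type*} [RCLike 𝕜] :
    IsCompact (unitaryGroup m 𝕜 : Set (Matrix m m 𝕜)) := by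
  have hbox : IsCompact
      {A : Matrix m m 𝕜 | ∀ i ∈ Set.univ, ∀ j ∈ Set.univ, A i j ∈ Metric.closedBall 0 1} :=
    isCompact_univ_pi fun _ => isCompact_univ_pi fun _ => isCompact_closedBall 0 1
  exact hbox.of_isClosed_subset isClosed_unitary fun _ hU i _ j _ =>
    mem_closedBall_zero_iff.mpr (entry_norm_bound_of_unitary hU i j)

theorem bddAbove_range_extractedWork (ρ H : Matrix m m ℂ) :
    BddAbove (Set.range fun U => extractedWork H U ρ) := by
  have hcont : Continuous fun U : Matrix m m ℂ =>
      (ρ * H).trace.re - (U * ρ * star U * H).trace.re :=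
    continuous_const.sub (Complex.continuous_re.comp
      (((continuous_id.matrix_mul continuous_const).matrix_mul continuous_star).matrix_mul
        continuous_const).matrix_trace)
  refine (isCompact_unitaryGroup.bddAbove_image hcont.continuousOn).mono ?_
  rintro _ ⟨U, rfl⟩
  exact ⟨U, U.2, rfl⟩

theorem convexOn_ergo (H : Matrix m m ℂ) : ConvexOn ℝ Set.univ fun ρ => ergo ρ H := by
  refine ⟨convex_univ, fun ρ _ σ _ a b ha hb _ => ciSup_le fun U => ?_⟩
  have hle (τ : Matrix m m ℂ) : extractedWork H U τ ≤ ergo τ H :=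
    le_ciSup (bddAbove_range_extractedWork τ H) U
  calc extractedWork H U (a • ρ + b • σ)
      = a • extractedWork H U ρ + b • extractedWork H U σ := by
        rw [map_add, map_smul, map_smul]
    _ ≤ a • ergo ρ H + b • ergo σ H := by gcongr <;> exact hle _

theorem ergo_le_energy {ρ H : Matrix m m ℂ} (hρ : ρ.PosSemidef) (hH : H.PosSemidef) :
    ergo ρ H ≤ energy H ρ :=
  ciSup_le fun U =>
    sub_le_self _ (energy_nonneg hH (hρ.mul_mul_conjTranspose_same (U : Matrix m m ℂ)))

end Ergotropy

/-! ### Total ergotropy and its maxima over input ensembles -/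

section TotalErgotropy

variable {d : ℕ} {h : Matrix (Fin d) (Fin d) ℂ} (hps : h.PosSemidef)

theorem ergo_tpow_div_le_lamMax {σ : Matrix (Fin d) (Fin d) ℂ} (hσ : IsDensity σ) (n : ℕ) :
    ergo (tpow σ n) (hSum h n) / n ≤ lamMax hps.isHermitian :=
  calc ergo (tpow σ n) (hSum h n) / n
      ≤ energy (hSum h n) (tpow σ n) / n := by
        gcongr
        exact ergo_le_energy (posSemidef_prodMat fun _ => hσ.1) (posSemidef_hSum hps n)
    _ ≤ lamMax hps.isHermitian := (energy_hSum_prodMat_div_mem_Icc (fun _ => hσ) hps).2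

theorem Etot_le_lamMax {σ : Matrix (Fin d) (Fin d) ℂ} (hσ : IsDensity σ) :
    Etot σ h ≤ lamMax hps.isHermitian :=
  ciSup_le fun N => ergo_tpow_div_le_lamMax hps hσ N

include hps in
theorem ergo_tpow_div_le_Etot {σ : Matrix (Fin d) (Fin d) ℂ} (hσ : IsDensity σ) {n : ℕ}
    (hn : 1 ≤ n) : ergo (tpow σ n) (hSum h n) / n ≤ Etot σ h :=
  le_ciSup (f := fun N : ℕ+ => ergo (tpow σ N) (hSum h N) / (N : ℕ))
    ⟨_, Set.forall_mem_range.mpr fun N => ergo_tpow_div_le_lamMax hps hσ N⟩ ⟨n, hn⟩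

variable {Λ : Matrix (Fin d) (Fin d) ℂ →ₗ[ℂ] Matrix (Fin d) (Fin d) ℂ}

theorem IsChannel.isDensity (hΛ : IsChannel Λ) {σ : Matrix (Fin d) (Fin d) ℂ} (hσ : IsDensity σ) :
    IsDensity (Λ σ) := by
  refine ⟨?_, by rw [hΛ.1, hσ.2]⟩
  -- Positivity of `Λ` is complete positivity for the one-dimensional ancilla.
  have hamp := hΛ.2 1 (σ.submatrix Prod.fst Prod.fst) (hσ.1.submatrix _)
  exact hamp.submatrix fun i : Fin d => (i, (0 : Fin 1))

variable (hΛ : ∀ σ, IsDensity σ → IsDensity (Λ σ))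
include hΛ

theorem E1tot_le_lamMax (e : ℝ) : E1tot Λ h e ≤ lamMax hps.isHermitian := by
  refine Real.sSup_le ?_ (lamMax_nonneg hps)
  rintro _ ⟨σ, hσ, -, rfl⟩
  exact Etot_le_lamMax hps (hΛ σ hσ)

include hps

theorem Etot_le_E1tot {σ : Matrix (Fin d) (Fin d) ℂ} (hσ : IsDensity σ) {e : ℝ}
    (he : energy h σ ≤ e) : Etot (Λ σ) h ≤ E1tot Λ h e := by
  refine le_csSup ⟨lamMax hps.isHermitian, ?_⟩ ⟨σ, hσ, he, rfl⟩
  rintro _ ⟨τ, hτ, -, rfl⟩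
  exact Etot_le_lamMax hps (hΛ τ hτ)

theorem sum_mul_E1tot_le_chiTot {J : Type*} [Fintype J] {w ε : J → ℝ} {e : ℝ}
    (hw : ∀ j, 0 ≤ w j) (hw_sum : ∑ j, w j = 1)
    (hε : ∀ j, ε j ∈ Set.Icc 0 (lamMax hps.isHermitian)) (he : ∑ j, w j * ε j ≤ e) :
    ∑ j, w j * E1tot Λ h (ε j) ≤ chiTot Λ h (lamMax hps.isHermitian) e := by
  let φ := (Fintype.equivFin J).symm
  refine le_csSup ⟨lamMax hps.isHermitian, ?_⟩ ⟨Fintype.card J, w ∘ φ, ε ∘ φ, fun j => hw _,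
    (φ.sum_comp w).trans hw_sum, fun j => hε _, (φ.sum_comp fun j => w j * ε j).trans_le he,
    (φ.sum_comp fun j => w j * E1tot Λ h (ε j)).symm⟩
  rintro _ ⟨m, p, η, hp, hp_sum, -, -, rfl⟩
  calc ∑ j, p j * E1tot Λ h (η j)
      ≤ ∑ j, p j * lamMax hps.isHermitian :=
        Finset.sum_le_sum fun j _ =>
          mul_le_mul_of_nonneg_left (E1tot_le_lamMax hps hΛ _) (hp j)
    _ = lamMax hps.isHermitian := by rw [← Finset.sum_mul, hp_sum, one_mul]

end TotalErgotropy

theorem statement15_general {d n : ℕ} (hn : 1 ≤ n)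
    {Λ : Matrix (Fin d) (Fin d) ℂ →ₗ[ℂ] Matrix (Fin d) (Fin d) ℂ}
    (hΛ : ∀ σ, IsDensity σ → IsDensity (Λ σ))
    {h : Matrix (Fin d) (Fin d) ℂ} (hps : h.PosSemidef)
    (Φ : Matrix (Fin n → Fin d) (Fin n → Fin d) ℂ →ₗ[ℝ]
      Matrix (Fin n → Fin d) (Fin n → Fin d) ℂ)
    (hopt : ∀ e ∈ Set.Icc (0 : ℝ) (lamMax hps.isHermitian),
      ∃ σ : Matrix (Fin d) (Fin d) ℂ, IsDensity σ ∧ energy h σ ≤ e ∧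
        ∀ ψ : Fin n → Fin d → ℂ, (∀ i, star (ψ i) ⬝ᵥ ψ i = 1) →
          ∑ i, (star (ψ i) ⬝ᵥ h *ᵥ ψ i).re ≤ n * e →
          ergo (Φ (pureProduct ψ)) (hSum h n) ≤ ergo (tpow (Λ σ) n) (hSum h n))
    {ρ : Matrix (Fin n → Fin d) (Fin n → Fin d) ℂ} (hρ : SepState ρ)
    {𝔢 : ℝ} (hE : energy (hSum h n) ρ ≤ n * 𝔢) :
    ergo (Φ ρ) (hSum h n) / n ≤ chiTot Λ h (lamMax hps.isHermitian) 𝔢 := by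
  have hn_pos : (0 : ℝ) < n := by exact_mod_cast hn
  obtain ⟨J, _, w, ψ, hw, hw_sum, hψ, rfl⟩ := hρ.exists_eq_sum_smul_pureProduct
  set ε : J → ℝ := fun j => energy (hSum h n) (pureProduct (ψ j)) / n with hε_def
  have hε (j : J) : ε j ∈ Set.Icc 0 (lamMax hps.isHermitian) :=
    energy_hSum_prodMat_div_mem_Icc (fun i => isDensity_vecMulVec_star (hψ j i)) hps
  have hbudget : ∑ j, w j * ε j ≤ 𝔢 := by
    simp only [hε_def, ← mul_div_assoc, ← Finset.sum_div]
    rw [div_le_iff₀' hn_pos]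
    simpa only [map_sum, map_smul, smul_eq_mul] using hE
  have hpure (j : J) : ergo (Φ (pureProduct (ψ j))) (hSum h n) / n ≤ E1tot Λ h (ε j) := by
    obtain ⟨σ, hσ, hσe, hσ_opt⟩ := hopt (ε j) (hε j)
    have hψe : ∑ i, (star (ψ j i) ⬝ᵥ h *ᵥ ψ j i).re ≤ n * ε j := by
      rw [← energy_hSum_pureProduct (hψ j), hε_def, mul_div_cancel₀ _ hn_pos.ne']
    calc ergo (Φ (pureProduct (ψ j))) (hSum h n) / n
        ≤ ergo (tpow (Λ σ) n) (hSum h n) / n := by gcongr; exact hσ_opt (ψ j) (hψ j) hψe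
      _ ≤ Etot (Λ σ) h := ergo_tpow_div_le_Etot hps (hΛ σ hσ) hn
      _ ≤ E1tot Λ h (ε j) := Etot_le_E1tot hps hΛ hσ hσe
  calc ergo (Φ (∑ j, w j • pureProduct (ψ j))) (hSum h n) / n
      ≤ (∑ j, w j * ergo (Φ (pureProduct (ψ j))) (hSum h n)) / n := by
        simp only [map_sum, map_smul]
        gcongr
        exact (convexOn_ergo _).map_sum_le (fun j _ => hw j) hw_sum fun _ _ => Set.mem_univ _
    _ = ∑ j, w j * (ergo (Φ (pureProduct (ψ j))) (hSum h n) / n) := by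
        simp only [Finset.sum_div, mul_div_assoc]
    _ ≤ ∑ j, w j * E1tot Λ h (ε j) :=
        Finset.sum_le_sum fun j _ => mul_le_mul_of_nonneg_left (hpure j) (hw j)
    _ ≤ chiTot Λ h (lamMax hps.isHermitian) 𝔢 :=
        sum_mul_E1tot_le_chiTot hps hΛ hw hw_sum hε hbudget

theorem statement15 {d : ℕ} (hd : 0 < d)
    (Λ : Matrix (Fin d) (Fin d) ℂ →ₗ[ℂ] Matrix (Fin d) (Fin d) ℂ) (hΛ : IsChannel Λ)
    (h : Matrix (Fin d) (Fin d) ℂ) (hps : h.PosSemidef)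
    (Λfam : ∀ n : ℕ, Matrix (Fin n → Fin d) (Fin n → Fin d) ℂ →ₗ[ℂ]
      Matrix (Fin n → Fin d) (Fin n → Fin d) ℂ)
    (hΛfam : ∀ (n : ℕ) (ρs : Fin n → Matrix (Fin d) (Fin d) ℂ),
      Λfam n (prodMat ρs) = prodMat fun i => Λ (ρs i))
    (𝔢 : ℝ) (h𝔢 : 𝔢 ∈ Set.Icc (0:ℝ) (lamMax hps.isHermitian))
    (hopt : ∀ e ∈ Set.Icc (0:ℝ) (lamMax hps.isHermitian), ∀ n : ℕ, 1 ≤ n →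
      ∃ σ : Matrix (Fin d) (Fin d) ℂ, IsDensity σ ∧ (σ * h).trace.re ≤ e ∧
        ∀ ψ : Fin n → (Fin d → ℂ), (∀ i, star (ψ i) ⬝ᵥ ψ i = 1) →
          (∑ i, (star (ψ i) ⬝ᵥ h.mulVec (ψ i)).re) ≤ n * e →
          ergo (Λfam n (prodMat fun i => Matrix.vecMulVec (ψ i) (star (ψ i)))) (hSum h n)
            ≤ ergo (tpow (Λ σ) n) (hSum h n))
 :
    ∀ n : ℕ, 1 ≤ n → ∀ ρ : Matrix (Fin n → Fin d) (Fin n → Fin d) ℂ,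
      IsDensity ρ → SepState ρ → (ρ * hSum h n).trace.re ≤ n * 𝔢 →
      ergo (Λfam n ρ) (hSum h n) / n ≤ chiTot Λ h (lamMax hps.isHermitian) 𝔢 := by
  intro n hn ρ _ hρ hE
  exact statement15_general hn (fun _ hσ => hΛ.isDensity hσ) hps ((Λfam n).restrictScalars ℝ)
    (fun e he => hopt e he n hn) hρ hE

end
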